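/- arXiv:1306.0173 — 2 statements merged into one kernel-verified Lean document; each statement's English description precedes it below -/
import Mathlib

section
/- Let μ ∈ ℝ, σ' > 0, ε > 0, and let X be a real random variable with law gaussianReal μ σ'², with cumulative distribution function F and density φ. Define the punish-reward estimator r̂(x, t) = (t + x)/2 if |x − t| ≤ ε, and r̂(x, t) = t − |t − x| if |x − t| > ε. Then the derivative at the truthful report x = μ of the map x ↦ E[r̂(x, X)] equals F(μ + ε) − 1/2 − ε·φ(μ + ε), and this quantity is strictly positive. Equivalently, writing ε = a·σ' with a > 0 and letting Φ and φ₀ denote the standard Gaussian cdf and density, Φ(a) − a·φ₀(a) > 1/2. Hence an image-seeking user strictly gains by inflating its self-report above μ. -/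
open MeasureTheory ProbabilityTheory
open scoped NNReal ENNReal

lemma q_even (v : ℝ≥0) (u : ℝ) : gaussianPDFReal 0 v (-u) = gaussianPDFReal 0 v u := by
  simp [gaussianPDFReal]

lemma q_cont (v : ℝ≥0) : Continuous (gaussianPDFReal 0 v) := by
  unfold gaussianPDFReal; fun_prop

lemma q_deriv (v : ℝ≥0) (u : ℝ) :
    HasDerivAt (gaussianPDFReal 0 v) (-(u / v) * gaussianPDFReal 0 v u) u := by
  unfold gaussianPDFReal
  have h1 : HasDerivAt (fun x : ℝ => -(x - 0) ^ 2 / (2 * (v:ℝ))) (-(u / v)) u := by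
    have := ((((hasDerivAt_id u).sub_const 0).pow 2).neg).div_const (2 * (v:ℝ))
    refine this.congr_deriv ?_
    simp
    by_cases hv : (v:ℝ) = 0
    · simp [hv]
    · field_simp
  refine (h1.exp.const_mul ((√(2 * Real.pi * v))⁻¹)).congr_deriv ?_
  ring

lemma cdf_eq (m : ℝ) (v : ℝ≥0) (hv : v ≠ 0) (e : ℝ) (he : 0 < e) :
    cdf (gaussianReal m v) (m + e) = 1 / 2 + ∫ u in (0:ℝ)..e, gaussianPDFReal 0 v u := by
  have hi : Integrable (gaussianPDFReal 0 v) := integrable_gaussianPDFReal 0 v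
  have h1 : cdf (gaussianReal m v) (m + e) = ∫ u in Set.Iic e, gaussianPDFReal 0 v u := by
    have : gaussianReal m v = (gaussianReal 0 v).map (· + m) := by
      rw [gaussianReal_map_add_const]; simp
    rw [cdf_eq_real, this, map_measureReal_apply (by fun_prop) measurableSet_Iic]
    have : (fun x => x + m) ⁻¹' Set.Iic (m + e) = Set.Iic e := by
      ext x; simp [add_comm]
    rw [this, measureReal_def, gaussianReal_apply_eq_integral _ hv, ENNReal.toReal_ofReal]
    exact integral_nonneg fun x => gaussianPDFReal_nonneg _ _ _
  have h2 : ∫ u in Set.Iic (0:ℝ), gaussianPDFReal 0 v u = 1 / 2 := by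
    have a := intervalIntegral.integral_Iic_add_Ioi (b := (0:ℝ)) hi.integrableOn hi.integrableOn
    rw [integral_gaussianPDFReal_eq_one 0 hv] at a
    have b := integral_comp_neg_Iic (0:ℝ) (gaussianPDFReal 0 v)
    simp only [q_even, neg_zero] at b
    linarith
  have h3 := intervalIntegral.integral_Iic_sub_Iic (a := (0:ℝ)) (b := e) hi.integrableOn hi.integrableOn
  linarith

lemma parts (v : ℝ≥0) (e : ℝ) :
    (∫ u in (0:ℝ)..e, gaussianPDFReal 0 v u) - e * gaussianPDFReal 0 v e
      = ∫ u in (0:ℝ)..e, u ^ 2 / v * gaussianPDFReal 0 v u := by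
  have hc := q_cont v
  have := intervalIntegral.integral_eq_sub_of_hasDerivAt (a := (0:ℝ)) (b := e)
    (f := fun u => u * gaussianPDFReal 0 v u)
    (f' := fun u => gaussianPDFReal 0 v u - u ^ 2 / v * gaussianPDFReal 0 v u)
    (fun x _ => by
      refine ((hasDerivAt_id x).mul (q_deriv v x)).congr_deriv ?_
      simp; ring)
    (Continuous.intervalIntegrable (by fun_prop) _ _)
  rw [intervalIntegral.integral_sub (Continuous.intervalIntegrable (by fun_prop) _ _)
    (Continuous.intervalIntegrable (by fun_prop) _ _)] at this
  simp at this
  linarith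

lemma key (m : ℝ) (v : ℝ≥0) (hv : v ≠ 0) (e : ℝ) (he : 0 < e) :
    cdf (gaussianReal m v) (m + e) - 1 / 2 - e * gaussianPDFReal m v (m + e)
      = ∫ u in (0:ℝ)..e, u ^ 2 / v * gaussianPDFReal 0 v u := by
  rw [← parts, cdf_eq m v hv e he]
  have : gaussianPDFReal m v (m + e) = gaussianPDFReal 0 v e := by simp [gaussianPDFReal]
  rw [this]; ring

lemma key_pos (v : ℝ≥0) (hv : v ≠ 0) (e : ℝ) (he : 0 < e) :
    0 < ∫ u in (0:ℝ)..e, u ^ 2 / v * gaussianPDFReal 0 v u := by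
  have hc := q_cont v
  apply intervalIntegral.intervalIntegral_pos_of_pos_on
    (Continuous.intervalIntegrable (by fun_prop) _ _) _ he
  intro x hx
  have := gaussianPDFReal_pos 0 v x hv
  have h0 : (0:ℝ) < v := by positivity
  have := hx.1
  positivity

/-- deviation function -/
noncomputable def gdev (e u : ℝ) : ℝ := if |u| ≤ e then - u / 2 else -|u|

lemma gdev_meas (e : ℝ) : Measurable (gdev e) := by
  unfold gdev
  exact Measurable.ite (measurableSet_le (by fun_prop) (by fun_prop)) (by fun_prop) (by fun_prop)

lemma gdev_bd (e u : ℝ) : |gdev e u| ≤ |u| := by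
  unfold gdev
  split_ifs
  · rw [abs_div, abs_neg]; simp
  · simp

lemma int_bd (b : ℝ) (hb : 0 < b) :
    Integrable (fun u : ℝ => (u ^ 2 + |u|) * Real.exp (-b * u ^ 2)) := by
  have h2 : Integrable (fun u : ℝ => u ^ 2 * Real.exp (-b * u ^ 2)) := by
    simpa using integrable_rpow_mul_exp_neg_mul_sq hb (s := 2) (by norm_num)
  have h1 : Integrable (fun u : ℝ => u * Real.exp (-b * u ^ 2)) := by
    simpa using integrable_rpow_mul_exp_neg_mul_sq hb (s := 1) (by norm_num)
  have h3 := h1.abs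
  refine (h2.add h3).congr (Filter.Eventually.of_forall fun u => ?_)
  simp only [Pi.add_apply, abs_mul, Real.abs_exp]
  ring

lemma deriv_int (v : ℝ≥0) (hv : v ≠ 0) (e : ℝ) :
    Integrable (fun u => -(u / v) * gaussianPDFReal 0 v u * gdev e u) ∧
    HasDerivAt (fun s => ∫ u, gaussianPDFReal 0 v (u + s) * gdev e u)
      (∫ u, -(u / v) * gaussianPDFReal 0 v u * gdev e u) 0 := by
  have h0 : (0:ℝ) < v := by positivity
  have hc := q_cont v
  have hm := gdev_meas e
  set C : ℝ := (√(2 * Real.pi * v))⁻¹ with hC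
  have hC0 : 0 ≤ C := by positivity
  have hq : ∀ u, gaussianPDFReal 0 v u = C * Real.exp (-u ^ 2 / (2 * v)) := by
    intro u; simp [gaussianPDFReal, hC]
  have hb : 0 < 1 / (4 * (v:ℝ)) := by positivity
  have hqb : ∀ s u : ℝ, |s| < 1 → gaussianPDFReal 0 v (u + s) ≤
      C * Real.exp (1 / (2 * v)) * Real.exp (-(1 / (4 * (v:ℝ))) * u ^ 2) := by
    intro s u hs
    rw [hq, mul_assoc, ← Real.exp_add]
    gcongr
    have : s ^ 2 ≤ 1 := by rw [← sq_abs]; nlinarith [abs_nonneg s]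
    rw [← sub_nonneg]
    have : 1 / (2 * (v:ℝ)) + -(1 / (4 * v)) * u ^ 2 - -(u + s) ^ 2 / (2 * v)
      = (2 - u ^ 2 + 2 * (u + s) ^ 2) / (4 * v) := by field_simp; ring
    rw [this]
    apply div_nonneg _ (by positivity)
    nlinarith [sq_nonneg (u + 2 * s)]
  have H := hasDerivAt_integral_of_dominated_loc_of_deriv_le (μ := volume) (x₀ := (0:ℝ))
    (F := fun s u => gaussianPDFReal 0 v (u + s) * gdev e u)
    (F' := fun s u => -((u + s) / v) * gaussianPDFReal 0 v (u + s) * gdev e u)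
    (s := Metric.ball 0 1)
    (bound := fun u => (C * Real.exp (1 / (2 * v)) / v) *
      ((u ^ 2 + |u|) * Real.exp (-(1 / (4 * (v:ℝ))) * u ^ 2)))
    (Metric.ball_mem_nhds 0 one_pos)
    (Filter.Eventually.of_forall fun s => by
      apply Measurable.aestronglyMeasurable
      exact (hc.measurable.comp (by fun_prop)).mul hm)
    ?_ ?_ ?_ ((int_bd _ hb).const_mul _) ?_
  · simpa using H
  · have h1 : Integrable (fun u : ℝ => u * Real.exp (-(1 / (2 * (v:ℝ))) * u ^ 2)) := by
      simpa using integrable_rpow_mul_exp_neg_mul_sq (b := 1 / (2 * (v:ℝ))) (by positivity)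
        (s := 1) (by norm_num)
    refine (h1.const_mul C).mono ?_ (Filter.Eventually.of_forall fun u => ?_)
    · apply Measurable.aestronglyMeasurable
      exact (hc.measurable.comp (by fun_prop)).mul hm
    · have e1 : -u ^ 2 / (2 * (v:ℝ)) = -(1 / (2 * (v:ℝ))) * u ^ 2 := by ring
      simp only [add_zero, hq, Real.norm_eq_abs, abs_mul, Real.abs_exp, e1]
      have := gdev_bd e u
      calc _ ≤ |C| * Real.exp (-(1 / (2 * (v:ℝ))) * u ^ 2) * |u| := by gcongr
        _ = _ := by ring
  · apply Measurable.aestronglyMeasurable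
    refine Measurable.mul (Measurable.mul (by fun_prop) (hc.measurable.comp (by fun_prop))) hm
  · refine Filter.Eventually.of_forall fun u s hs => ?_
    have hs : |s| < 1 := by simpa using hs
    have a1 := hqb s u hs
    have a2 := gdev_bd e u
    have a3 : |u + s| ≤ |u| + 1 := (abs_add_le u s).trans (by linarith)
    rw [Real.norm_eq_abs, abs_mul, abs_mul, abs_neg, abs_div, abs_of_pos h0,
      abs_of_nonneg (gaussianPDFReal_nonneg _ _ _)]
    have hn := gaussianPDFReal_nonneg 0 v (u + s)
    calc _ ≤ (|u| + 1) / v * (C * Real.exp (1 / (2 * v)) * Real.exp (-(1 / (4 * (v:ℝ))) * u ^ 2)) * |u| := by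
          gcongr
      _ = _ := by rw [← sq_abs u]; ring
  · refine Filter.Eventually.of_forall fun u s hs => ?_
    have := ((q_deriv v (u + s)).comp s ((hasDerivAt_id s).const_add u)).mul_const (gdev e u)
    simpa using this

lemma eval_int (v : ℝ≥0) (hv : v ≠ 0) (e : ℝ) (he : 0 < e) :
    ∫ u, -(u / v) * gaussianPDFReal 0 v u * gdev e u
      = ∫ u in (0:ℝ)..e, u ^ 2 / v * gaussianPDFReal 0 v u := by
  have hc := q_cont v
  have hi := (deriv_int v hv e).1
  set f := fun u => -(u / v) * gaussianPDFReal 0 v u * gdev e u with hf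
  set k := fun u : ℝ => u ^ 2 / v * gaussianPDFReal 0 v u with hk
  have hkc : Continuous k := by fun_prop
  have h1 : ∫ u, f u = (∫ u in Set.Ioi 0, f (-u)) + ∫ u in Set.Ioi 0, f u := by
    rw [integral_comp_neg_Ioi, neg_zero]
    exact (intervalIntegral.integral_Iic_add_Ioi hi.integrableOn hi.integrableOn).symm
  have h2 : ∀ u ∈ Set.Ioi (0:ℝ), f (-u) + f u = (Set.Ioc 0 e).indicator k u := by
    intro u hu
    have hu : 0 < u := hu
    simp only [hf, hk, q_even, gdev, abs_neg, abs_of_pos hu, Set.indicator, Set.mem_Ioc, hu, true_and]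
    split_ifs <;> ring
  rw [h1, ← integral_add hi.comp_neg.integrableOn hi.integrableOn,
    setIntegral_congr_fun measurableSet_Ioi h2, setIntegral_indicator measurableSet_Ioc,
    intervalIntegral.integral_of_le he.le]
  congr 2
  ext x; simp

theorem stmt12 {Ω : Type*} [MeasurableSpace Ω] (P : Measure Ω) [IsProbabilityMeasure P]
    (μ : ℝ) (σ' : ℝ≥0) (hσ' : 0 < σ') (ε : ℝ) (hε : 0 < ε)
    (X : Ω → ℝ) (hXm : Measurable X) (hX : P.map X = gaussianReal μ (σ' ^ 2))
    (F : ℝ → ℝ) (hF : ∀ t, F t = cdf (gaussianReal μ (σ' ^ 2)) t)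
    (φ : ℝ → ℝ) (hφ : ∀ t, φ t = gaussianPDFReal μ (σ' ^ 2) t)
    (rhat : ℝ → ℝ → ℝ)
    (hrhat : ∀ x t, rhat x t = if |x - t| ≤ ε then (t + x) / 2 else t - |t - x|) :
    HasDerivAt (fun y => ∫ ω, rhat y (X ω) ∂P)
        (F (μ + ε) - 1 / 2 - ε * φ (μ + ε)) μ ∧
      0 < F (μ + ε) - 1 / 2 - ε * φ (μ + ε) ∧
      ∀ a : ℝ, 0 < a →
        1 / 2 < cdf (gaussianReal 0 1) a - a * gaussianPDFReal 0 1 a := by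
  have hv : σ' ^ 2 ≠ 0 := by positivity
  rw [hF, hφ, key μ _ hv ε hε]
  refine ⟨?_, key_pos _ hv ε hε, fun a ha => ?_⟩
  · have hr : ∀ y t, rhat y t = t + gdev ε (t - y) := by
      intro y t
      rw [hrhat, gdev, abs_sub_comm y t]
      split_ifs <;> ring
    have hE : ∀ y, ∫ ω, rhat y (X ω) ∂P =
        μ + ∫ u, gaussianPDFReal 0 (σ' ^ 2) (u + (y - μ)) * gdev ε u := by
      intro y
      have hm := gdev_meas ε
      have hmy : Measurable (fun t => gdev ε (t - y)) := hm.comp (by fun_prop)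
      have hid : Integrable (fun t : ℝ => t) (gaussianReal μ (σ' ^ 2)) :=
        (memLp_id_gaussianReal (μ := μ) (v := σ' ^ 2) 1).integrable le_rfl
      have hg : Integrable (fun t : ℝ => gdev ε (t - y)) (gaussianReal μ (σ' ^ 2)) :=
        (hid.sub (integrable_const y)).mono hmy.aestronglyMeasurable
          (Filter.Eventually.of_forall fun t => gdev_bd ε _)
      simp only [hr]
      rw [← integral_map (f := fun t => t + gdev ε (t - y)) hXm.aemeasurable
        (measurable_id.add hmy).aestronglyMeasurable, hX, integral_add hid hg,
        integral_id_gaussianReal, integral_gaussianReal_eq_integral_smul hv,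
        ← integral_add_right_eq_self _ y]
      congr 2
      ext u
      simp [gaussianPDFReal, add_sub_assoc]
    rw [funext hE, ← eval_int _ hv ε hε]
    apply HasDerivAt.const_add
    have h := (deriv_int (σ' ^ 2) hv ε).2
    exact HasDerivAt.comp_sub_const μ μ (by rw [sub_self]; exact h)
  · have h1 := key 0 1 one_ne_zero a ha
    have h2 := key_pos 1 one_ne_zero a ha
    rw [zero_add] at h1
    linarith
end

section
/- Let μ ∈ ℝ, σ' > 0, ε > 0, and let X be a real random variable with law gaussianReal μ σ'², with cumulative distribution function F and density φ. Define the punish-reward estimator r̂(x, t) = (t + x)/2 if |x − t| ≤ ε, and r̂(x, t) = t − |t − x| if |x − t| > ε. Then the derivative at x = μ + ε of the map x ↦ E[r̂(x, X)], namely 1 + (ε/2)·(φ(μ + 2ε) − 3·φ(μ)) − (1/2)·(F(μ + 2ε) + 3/2), is strictly negative. Hence the optimal self-report of an image-seeking user does not exceed μ + ε: together with the positivity of the derivative at x = μ, any stationary maximizer of E[r̂(·, X)] lies strictly between μ and μ + ε. -/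
open MeasureTheory ProbabilityTheory
open scoped NNReal ENNReal

lemma aux_cont (μ : ℝ) (v : ℝ≥0) : Continuous (gaussianPDFReal μ v) := by
  rw [gaussianPDFReal_def]; fun_prop

/-- Derivative of a partial Gaussian moment. -/
lemma aux_deriv (μ : ℝ) (v : ℝ≥0) (hv : v ≠ 0) (g : ℝ → ℝ) (hg : Continuous g)
    (hi : Integrable g (gaussianReal μ v)) (s : ℝ) :
    HasDerivAt (fun s => ∫ t in Set.Iic s, g t ∂(gaussianReal μ v))
      (gaussianPDFReal μ v s * g s) s := by
  have hI : Integrable (fun t => gaussianPDFReal μ v t * g t) := by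
    rw [gaussianReal_of_var_ne_zero _ hv,
      integrable_withDensity_iff_integrable_smul' (measurable_gaussianPDF _ _)
        (ae_of_all _ fun _ => gaussianPDF_lt_top)] at hi
    simpa [toReal_gaussianPDF] using hi
  have hc : Continuous (fun t => gaussianPDFReal μ v t * g t) := (aux_cont μ v).mul hg
  have key : (fun s => ∫ t in Set.Iic s, g t ∂(gaussianReal μ v)) = fun s =>
      (∫ t in Set.Iic (0 : ℝ), gaussianPDFReal μ v t * g t)
        + ∫ t in (0 : ℝ)..s, gaussianPDFReal μ v t * g t := by
    funext s
    rw [← intervalIntegral.integral_Iic_sub_Iic hI.integrableOn hI.integrableOn,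
      ← integral_indicator measurableSet_Iic, integral_gaussianReal_eq_integral_smul hv,
      add_sub_cancel, ← integral_indicator measurableSet_Iic]
    congr 1
    funext t
    by_cases h : t ∈ Set.Iic s <;> simp [h]
  rw [key]
  exact (intervalIntegral.integral_hasDerivAt_right hI.intervalIntegrable
    (hc.stronglyMeasurableAtFilter _ _) hc.continuousAt).const_add _

lemma aux_half (μ : ℝ) (v : ℝ≥0) (hv : v ≠ 0) :
    (gaussianReal μ v).real (Set.Iic μ) = 1 / 2 := by
  have : NullSingletonClass (gaussianReal μ v) := nullSingletonClass_gaussianReal hv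
  have h1 : (gaussianReal μ v).real (Set.Iic μ) = (gaussianReal μ v).real (Set.Ici μ) := by
    have h := gaussianReal_map_const_sub (μ := μ) (v := v) (2 * μ)
    rw [show 2 * μ - μ = μ by ring] at h
    conv_lhs => rw [← h]
    rw [map_measureReal_apply (by fun_prop) measurableSet_Iic]
    congr 1
    ext t
    simp only [Set.mem_preimage, Set.mem_Iic, Set.mem_Ici]
    constructor <;> intro <;> linarith
  have h2 : (gaussianReal μ v).real (Set.Ici μ) = (gaussianReal μ v).real (Set.Ioi μ) :=
    measureReal_congr Ioi_ae_eq_Ici.symm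
  have h3 := probReal_compl_eq_one_sub (μ := gaussianReal μ v) (measurableSet_Iic (a := μ))
  rw [Set.compl_Iic] at h3
  linarith

/-- The derivative at `x = μ + ε` of the expected reputation `x ↦ E[r̂(x, X)]` in the
punish-reward mechanism, namely
`1 + (ε/2)(φ(μ+2ε) − 3φ(μ)) − (1/2)(F(μ+2ε) + 3/2)`, is strictly negative; hence the
optimal self-report of an image-seeking user does not exceed `μ + ε`. -/
theorem stmt13 {Ω : Type*} [MeasurableSpace Ω] (P : Measure Ω) [IsProbabilityMeasure P]
    (μ : ℝ) (σ' : ℝ≥0) (hσ' : 0 < σ') (ε : ℝ) (hε : 0 < ε)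
    (X : Ω → ℝ) (hXm : Measurable X) (hX : P.map X = gaussianReal μ (σ' ^ 2))
    (F : ℝ → ℝ) (hF : ∀ t, F t = cdf (gaussianReal μ (σ' ^ 2)) t)
    (φ : ℝ → ℝ) (hφ : ∀ t, φ t = gaussianPDFReal μ (σ' ^ 2) t)
    (rhat : ℝ → ℝ → ℝ)
    (hrhat : ∀ x t, rhat x t = if |x - t| ≤ ε then (t + x) / 2 else t - |t - x|) :
    HasDerivAt (fun y => ∫ ω, rhat y (X ω) ∂P)
        (1 + ε / 2 * (φ (μ + 2 * ε) - 3 * φ μ)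
          - 1 / 2 * (F (μ + 2 * ε) + 3 / 2)) (μ + ε) ∧
      1 + ε / 2 * (φ (μ + 2 * ε) - 3 * φ μ)
          - 1 / 2 * (F (μ + 2 * ε) + 3 / 2) < 0 := by
  have hv : σ' ^ 2 ≠ 0 := pow_ne_zero _ hσ'.ne'
  generalize σ' ^ 2 = v at *
  have hns : NullSingletonClass (gaussianReal μ v) := nullSingletonClass_gaussianReal hv
  have hFhalf : F μ = 1 / 2 := by rw [hF, cdf_eq_real, aux_half μ v hv]
  have hid : Integrable (fun t : ℝ => t) (gaussianReal μ v) :=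
    (memLp_id_gaussianReal' 1 (by simp)).integrable le_rfl
  have hone : Integrable (fun _ : ℝ => (1 : ℝ)) (gaussianReal μ v) := integrable_const _
  have dF : ∀ s, HasDerivAt F (φ s) s := by
    intro s
    have h := aux_deriv μ v hv (fun _ => 1) continuous_const hone s
    have e : F = fun s => ∫ t in Set.Iic s, (1 : ℝ) ∂(gaussianReal μ v) := by
      funext s
      rw [hF, cdf_eq_real]
      simp
    rw [e, hφ]
    simpa using h
  set G : ℝ → ℝ := fun s => ∫ t in Set.Iic s, t ∂(gaussianReal μ v) with hG
  have dG : ∀ s, HasDerivAt G (φ s * s) s := by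
    intro s
    rw [hφ]
    exact aux_deriv μ v hv (fun t => t) continuous_id hid s
  have hlin : ∀ a y s, (∫ t in Set.Iic s, a * (t - y) ∂(gaussianReal μ v))
      = a * (G s - y * F s) := by
    intro a y s
    rw [integral_const_mul, integral_sub hid.integrableOn (integrable_const _), hF, cdf_eq_real]
    simp [hG, mul_comm]
  have hil : ∀ a y, Integrable (fun t : ℝ => a * (t - y)) (gaussianReal μ v) := fun a y =>
    (hid.sub (integrable_const y)).const_mul a
  have key : (fun y => ∫ ω, rhat y (X ω) ∂P) = fun y =>
      y + 3 / 2 * (G (y - ε) - y * F (y - ε)) + 1 / 2 * (G (y + ε) - y * F (y + ε)) := by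
    funext y
    have hrw : rhat y = fun t => y + (Set.Iio (y - ε)).indicator (fun t => 3 / 2 * (t - y)) t
        + (Set.Iic (y + ε)).indicator (fun t => 1 / 2 * (t - y)) t := by
      funext t
      rw [hrhat]
      simp only [Set.indicator, Set.mem_Iio, Set.mem_Iic]
      by_cases h1 : t < y - ε
      · have h2 : t ≤ y + ε := by linarith
        have h3 : ¬ |y - t| ≤ ε := by
          rw [abs_of_pos (by linarith)]; linarith
        rw [if_neg h3, if_pos h1, if_pos h2, abs_of_neg (by linarith)]
        ring
      · by_cases h2 : t ≤ y + ε
        · have h3 : |y - t| ≤ ε := by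
            rw [abs_le]; constructor <;> linarith
          rw [if_pos h3, if_neg h1, if_pos h2]
          ring
        · have h3 : ¬ |y - t| ≤ ε := by
            rw [abs_of_neg (by linarith)]; linarith
          rw [if_neg h3, if_neg h1, if_neg h2, abs_of_pos (by linarith)]
          ring
    have i1 := (hil (3 / 2) y).indicator (measurableSet_Iio (a := y - ε))
    have i2 := (hil (1 / 2) y).indicator (measurableSet_Iic (a := y + ε))
    have hsm : AEStronglyMeasurable (rhat y) (P.map X) := by
      rw [hX, hrw]
      exact (((integrable_const y).add i1).add i2).aestronglyMeasurable
    have i3 : Integrable (fun t => y +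
        (Set.Iio (y - ε)).indicator (fun t => 3 / 2 * (t - y)) t) (gaussianReal μ v) :=
      (integrable_const y).add i1
    rw [← integral_map hXm.aemeasurable hsm, hX, hrw,
      integral_add i3 i2, integral_add (integrable_const y) i1,
      integral_indicator measurableSet_Iio, integral_indicator measurableSet_Iic,
      ← integral_Iic_eq_integral_Iio, hlin, hlin]
    simp
  constructor
  · rw [key]
    have hm : HasDerivAt (fun y : ℝ => y - ε) 1 (μ + ε) := (hasDerivAt_id _).sub_const ε
    have hp : HasDerivAt (fun y : ℝ => y + ε) 1 (μ + ε) := (hasDerivAt_id _).add_const ε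
    have hi : HasDerivAt (fun y : ℝ => y) 1 (μ + ε) := hasDerivAt_id _
    have f1 := (dF (μ + ε - ε)).comp (μ + ε) hm
    have f2 := (dF (μ + ε + ε)).comp (μ + ε) hp
    have g1 := (dG (μ + ε - ε)).comp (μ + ε) hm
    have g2 := (dG (μ + ε + ε)).comp (μ + ε) hp
    have h := (hi.add ((g1.sub (hi.mul f1)).const_mul (3 / 2))).add
      ((g2.sub (hi.mul f2)).const_mul (1 / 2))
    refine h.congr_deriv ?_
    simp only [Function.comp]
    rw [show μ + ε - ε = μ by ring, show μ + ε + ε = μ + 2 * ε by ring, hFhalf]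
    ring
  · have hmono : F μ ≤ F (μ + 2 * ε) := by
      rw [hF, hF]
      exact monotone_cdf _ (by linarith)
    have hpos : 0 < φ μ := by rw [hφ]; exact gaussianPDFReal_pos _ _ _ hv
    have hle : φ (μ + 2 * ε) ≤ φ μ := by
      rw [hφ, hφ, gaussianPDFReal, gaussianPDFReal]
      refine mul_le_mul_of_nonneg_left (Real.exp_le_exp.2 ?_) (by positivity)
      rw [neg_div, neg_div, neg_le_neg_iff, sub_self]
      simp only [ne_eq, OfNat.ofNat_ne_zero, not_false_eq_true, zero_pow, zero_div]
      positivity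
    have : ε / 2 * (φ (μ + 2 * ε) - 3 * φ μ) < 0 :=
      mul_neg_of_pos_of_neg (by linarith) (by linarith)
    linarith
end
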